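/- Let (J, B, ω) be a symplectic pseudo-euclidean Jordan algebra over the field ℂ. Then there exist two subalgebras U and V of J such that J = U ⊕ V as vector spaces, B(U, U) = B(V, V) = {0}, and ω(U, U) = ω(V, V) = {0} (i.e., (J = U ⊕ V, B, ω) is a symplectic Jordan-Manin algebra). -/

import Mathlib

open Module Module.End

section GenEigenspaces

variable {K M N P : Type*} [Field K] [AddCommGroup M] [Module K M] [AddCommGroup N] [Module K N]
  [AddCommGroup P] [Module K P]

/-- The sum of the generalized eigenspaces of `D` whose eigenvalue lies in `S`. -/
def genEigenspaceSup (D : End K M) (S : Set K) : Submodule K M :=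
  ⨆ a ∈ S, D.maxGenEigenspace a

theorem pow_sub_smul_bilin_eq_zero {D : End K M} {E : End K N} {F : End K P}
    {f : M →ₗ[K] N →ₗ[K] P} (hf : ∀ x y, F (f x y) = f (D x) y + f x (E y)) (a b : K) (k : ℕ) :
    ∀ (m n : ℕ) (x : M) (y : N), m + n = k → ((D - a • 1) ^ m) x = 0 → ((E - b • 1) ^ n) y = 0 →
      ((F - (a + b) • 1) ^ k) (f x y) = 0 := by
  induction k with
  | zero =>
    intro m n x y hmn hx hy
    obtain ⟨rfl, rfl⟩ : m = 0 ∧ n = 0 := by omega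
    simp_all
  | succ k ih =>
    intro m n x y hmn hx hy
    rcases m with _ | m
    · simp_all
    rcases n with _ | n
    · simp_all
    have key : (F - (a + b) • 1) (f x y) = f ((D - a • 1) x) y + f x ((E - b • 1) y) := by
      simp only [LinearMap.sub_apply, LinearMap.smul_apply, End.one_apply, hf, map_sub, map_smul,
        add_smul, LinearMap.add_apply]
      abel
    rw [pow_succ, End.mul_apply, key, map_add,
      ih m (n + 1) _ _ (by omega) (by rwa [pow_succ, End.mul_apply] at hx) hy,
      ih (m + 1) n _ _ (by omega) hx (by rwa [pow_succ, End.mul_apply] at hy), add_zero]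

theorem bilin_mem_maxGenEigenspace_add {D : End K M} {E : End K N} {F : End K P}
    {f : M →ₗ[K] N →ₗ[K] P} (hf : ∀ x y, F (f x y) = f (D x) y + f x (E y)) {a b : K} {x : M}
    {y : N} (hx : x ∈ D.maxGenEigenspace a) (hy : y ∈ E.maxGenEigenspace b) :
    f x y ∈ F.maxGenEigenspace (a + b) := by
  rw [mem_maxGenEigenspace] at hx hy ⊢
  obtain ⟨m, hx⟩ := hx
  obtain ⟨n, hy⟩ := hy
  exact ⟨m + n, pow_sub_smul_bilin_eq_zero hf a b _ m n x y rfl hx hy⟩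

theorem bilin_mem_genEigenspaceSup {D : End K M} {E : End K N} {F : End K P}
    {f : M →ₗ[K] N →ₗ[K] P} (hf : ∀ x y, F (f x y) = f (D x) y + f x (E y)) {S T R : Set K}
    (hST : ∀ a ∈ S, ∀ b ∈ T, a + b ∈ R) {x : M} {y : N} (hx : x ∈ genEigenspaceSup D S)
    (hy : y ∈ genEigenspaceSup E T) : f x y ∈ genEigenspaceSup F R := by
  suffices h : Submodule.map₂ f (genEigenspaceSup D S) (genEigenspaceSup E T) ≤
      genEigenspaceSup F R from
    h (Submodule.apply_mem_map₂ f hx hy)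
  simp only [genEigenspaceSup, Submodule.map₂_iSup_left, Submodule.map₂_iSup_right, iSup_le_iff]
  intro b hb a ha
  refine Submodule.map₂_le.mpr fun u hu v hv => ?_
  exact Submodule.mem_iSup_of_mem _ (Submodule.mem_iSup_of_mem (hST a ha b hb)
    (bilin_mem_maxGenEigenspace_add hf hu hv))

theorem genEigenspaceSup_zero_eq_bot {S : Set K} (hS : 0 ∉ S) :
    genEigenspaceSup (0 : End K M) S = ⊥ := by
  simp only [genEigenspaceSup, iSup_eq_bot]
  intro a ha
  have ha0 : a ≠ 0 := fun h => hS (h ▸ ha)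
  refine (Submodule.eq_bot_iff _).mpr fun x hx => ?_
  obtain ⟨k, hk⟩ := (mem_maxGenEigenspace _ _ _).mp hx
  have hpow : ((0 : End K M) - a • 1) ^ k = (-a) ^ k • 1 := by
    rw [zero_sub, ← neg_smul, smul_pow, one_pow]
  rw [hpow] at hk
  simpa [ha0] using hk

theorem bilinForm_eq_zero_of_mem_genEigenspaceSup {D : End K M} {f : M →ₗ[K] M →ₗ[K] K}
    (hf : ∀ x y, f (D x) y + f x (D y) = 0) {S : Set K} (hS : ∀ a ∈ S, ∀ b ∈ S, a + b ≠ 0)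
    {x y : M} (hx : x ∈ genEigenspaceSup D S) (hy : y ∈ genEigenspaceSup D S) : f x y = 0 := by
  have h := bilin_mem_genEigenspaceSup (F := 0) (R := {0}ᶜ) (fun x y => (hf x y).symm) hS hx hy
  rwa [genEigenspaceSup_zero_eq_bot (by simp), Submodule.mem_bot] at h

theorem isCompl_genEigenspaceSup [IsAlgClosed K] [FiniteDimensional K M] {D : End K M}
    (hD : Function.Injective D) {S T : Set K} (hdisj : Disjoint S T)
    (hcover : ∀ a, a ≠ 0 → a ∈ S ∪ T) :
    IsCompl (genEigenspaceSup D S) (genEigenspaceSup D T) := by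
  refine ⟨D.independent_maxGenEigenspace.disjoint_biSup_biSup hdisj, ?_⟩
  rw [codisjoint_iff_le_sup, ← iSup_maxGenEigenspace_eq_top D, iSup_le_iff]
  intro a
  by_cases ha : a = 0
  · intro x hx
    obtain ⟨k, hk⟩ := (mem_maxGenEigenspace _ _ _).mp hx
    rw [ha, zero_smul, sub_zero, End.pow_apply] at hk
    have hx0 : x = 0 := hD.iterate k (by rw [hk, iterate_map_zero])
    simp [hx0]
  · rcases hcover a ha with h | h
    · exact (le_iSup₂ (f := fun a (_ : a ∈ S) => D.maxGenEigenspace a) a h).trans le_sup_left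
    · exact (le_iSup₂ (f := fun a (_ : a ∈ T) => D.maxGenEigenspace a) a h).trans le_sup_right

end GenEigenspaces

/-- The complex numbers that are positive for the lexicographic order on `(re, im)`. -/
def lexPositive : Set ℂ := {a | 0 < a.re ∨ a.re = 0 ∧ 0 < a.im}

theorem add_mem_lexPositive {a b : ℂ} (ha : a ∈ lexPositive) (hb : b ∈ lexPositive) :
    a + b ∈ lexPositive := by
  simp only [lexPositive, Set.mem_ofPred_eq, Complex.add_re, Complex.add_im] at *
  grind

theorem zero_notMem_lexPositive : (0 : ℂ) ∉ lexPositive := by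
  simp [lexPositive]

theorem mem_or_neg_mem_lexPositive {a : ℂ} (ha : a ≠ 0) : a ∈ lexPositive ∨ -a ∈ lexPositive := by
  simp only [lexPositive, Set.mem_ofPred_eq, Complex.neg_re, Complex.neg_im]
  have : ¬(a.re = 0 ∧ a.im = 0) := fun h => ha (Complex.ext h.1 h.2)
  grind

/-- every symplectic pseudo-euclidean Jordan algebra `(J, B, ω)` over `ℂ`
is a symplectic Jordan-Manin algebra: `J = U ⊕ V` with `U`, `V` subalgebras that are
totally isotropic for both `B` and `ω`. -/
theorem symplectic_pseudoEuclidean_is_jordan_manin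
    {J : Type*} [NonUnitalNonAssocCommRing J] [Module ℂ J]
    [SMulCommClass ℂ J J] [IsScalarTower ℂ J J] [FiniteDimensional ℂ J]
    (hjordan : ∀ x y : J, (x * y) * (x * x) = x * (y * (x * x)))
    (B : J →ₗ[ℂ] J →ₗ[ℂ] ℂ)
    (hsymm : ∀ x y : J, B x y = B y x)
    (hBnondeg : ∀ x : J, (∀ y : J, B x y = 0) → x = 0)
    (hassoc : ∀ x y z : J, B (x * y) z = B x (y * z))
    (ω : J →ₗ[ℂ] J →ₗ[ℂ] ℂ)
    (hskew : ∀ x y : J, ω x y = -ω y x)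
    (hωnondeg : ∀ x : J, (∀ y : J, ω x y = 0) → x = 0)
    (hcyc : ∀ x y z : J, ω (x * y) z + ω (y * z) x + ω (z * x) y = 0) :
    ∃ U V : Submodule ℂ J,
      (∀ x ∈ U, ∀ y ∈ U, x * y ∈ U) ∧
      (∀ x ∈ V, ∀ y ∈ V, x * y ∈ V) ∧
      IsCompl U V ∧
      (∀ x ∈ U, ∀ y ∈ U, B x y = 0) ∧
      (∀ x ∈ V, ∀ y ∈ V, B x y = 0) ∧
      (∀ x ∈ U, ∀ y ∈ U, ω x y = 0) ∧
      (∀ x ∈ V, ∀ y ∈ V, ω x y = 0) := by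
  have hBker : LinearMap.ker B = ⊥ :=
    LinearMap.ker_eq_bot'.mpr fun x hx => hBnondeg x fun y => by simp [hx]
  let e : J ≃ₗ[ℂ] Dual ℂ J :=
    LinearEquiv.ofInjectiveOfFinrankEq B (LinearMap.ker_eq_bot.mp hBker)
      Subspace.dual_finrank_eq.symm
  let D : End ℂ J := e.symm.toLinearMap ∘ₗ ω
  have hBD (x y : J) : B (D x) y = ω x y :=
    congrArg (fun g : Dual ℂ J => g y) (e.apply_symm_apply (ω x))
  have hDinj : Function.Injective D := by
    refine (injective_iff_map_eq_zero D).mpr fun x hx => hωnondeg x fun y => ?_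
    rw [← hBD, hx, map_zero, LinearMap.zero_apply]
  have hBskew (x y : J) : B (D x) y + B x (D y) = 0 := by
    rw [hBD, hsymm x, hBD, hskew x y, neg_add_cancel]
  have hωskew (x y : J) : ω (D x) y + ω x (D y) = 0 := by
    rw [← hBD, ← hBD, hBskew]
  have hderiv (x y : J) : D (x * y) = D x * y + x * D y := by
    refine sub_eq_zero.mp (hBnondeg _ fun z => ?_)
    have h₁ : B (D x * y) z = - ω (y * z) x := by rw [hassoc, hBD, hskew]
    have h₂ : B (x * D y) z = - ω (z * x) y := by
      rw [mul_comm x, hassoc, hBD, hskew, mul_comm x]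
    rw [map_sub, map_add, LinearMap.sub_apply, LinearMap.add_apply, hBD, h₁, h₂]
    linear_combination hcyc x y z
  have hmul (x y : J) : D (LinearMap.mul ℂ J x y) =
      LinearMap.mul ℂ J (D x) y + LinearMap.mul ℂ J x (D y) := hderiv x y
  have hneg (a : ℂ) (ha : a ∈ -lexPositive) (b : ℂ) (hb : b ∈ -lexPositive) :
      a + b ∈ -lexPositive := by
    rw [Set.mem_neg, neg_add]
    exact add_mem_lexPositive ha hb
  have hpos_ne (a : ℂ) (ha : a ∈ lexPositive) (b : ℂ) (hb : b ∈ lexPositive) : a + b ≠ 0 :=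
    fun h => zero_notMem_lexPositive (h ▸ add_mem_lexPositive ha hb)
  have hneg_ne (a : ℂ) (ha : a ∈ -lexPositive) (b : ℂ) (hb : b ∈ -lexPositive) : a + b ≠ 0 :=
    fun h => zero_notMem_lexPositive (by simpa [h] using hneg a ha b hb)
  refine ⟨genEigenspaceSup D lexPositive, genEigenspaceSup D (-lexPositive),
    fun x hx y hy => bilin_mem_genEigenspaceSup hmul (fun _ ha _ hb => add_mem_lexPositive ha hb)
      hx hy,
    fun x hx y hy => bilin_mem_genEigenspaceSup hmul hneg hx hy,
    isCompl_genEigenspaceSup hDinj ?_ fun a ha => mem_or_neg_mem_lexPositive ha,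
    fun x hx y hy => bilinForm_eq_zero_of_mem_genEigenspaceSup hBskew hpos_ne hx hy,
    fun x hx y hy => bilinForm_eq_zero_of_mem_genEigenspaceSup hBskew hneg_ne hx hy,
    fun x hx y hy => bilinForm_eq_zero_of_mem_genEigenspaceSup hωskew hpos_ne hx hy,
    fun x hx y hy => bilinForm_eq_zero_of_mem_genEigenspaceSup hωskew hneg_ne hx hy⟩
  exact Set.disjoint_left.mpr fun a ha hna => hpos_ne a ha (-a) hna (add_neg_cancel a)
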